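/- Let v : ℝ × ℝ × ℝ → ℝ be continuous, T-periodic in its first argument, and suppose there exist constants a, b ≥ 0 and δ > 0 with |v(t,x,y)| ≤ a + b·|y|^(2-δ) for all t, x, y. Suppose there exist C² functions x₁, x₂ : ℝ → ℝ, each T-periodic, with x₁(t) < x₂(t), x₁''(t) > v(t, x₁(t), x₁'(t)), and x₂''(t) < v(t, x₂(t), x₂'(t)) for all t. Then the equation x'' = v(t, x, x') has a T-periodic solution x with x₁(t) < x(t) < x₂(t) for all t. -/

import Mathlib

open Filter Topology Set

/-- discrete existence -/
lemma disc_exists (T h L A B : ℝ) (n : ℕ) (hh : 0 < h) (hnT : n * h = T) (hL : L * h = 1) (hAB : A ≤ B)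
    (g : ℝ → ℝ → ℝ → ℝ) (hper : ∀ t x y, g (t + T) x y = g t x y)
    (hlip : ∀ t x y x' y', g t x y ≤ g t x' y' + L * (|x - x'| + |y - y'|))
    (hA : ∀ t, g t A 0 ≤ 0) (hB : ∀ t, 0 ≤ g t B 0) :
    ∃ u : ℤ → ℝ, (∀ i, u (i + n) = u i) ∧ (∀ i, A ≤ u i ∧ u i ≤ B) ∧
      ∀ i, u (i+1) + u (i-1) - 2 * u i =
        h^2 * g (i * h) (u i) ((u (i+1) - u (i-1)) / (2*h)) := by
  set Φ : (ℤ → ℝ) → ℤ → ℝ := fun u i =>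
    (u (i+1) + u (i-1) + h * u i - h^2 * g (i * h) (u i) ((u (i+1) - u (i-1)) / (2*h))) / (2 + h)
    with hΦ
  have h2 : 0 < 2 + h := by linarith
  have hmono : ∀ u w : ℤ → ℝ, (∀ i, u i ≤ w i) → ∀ i, Φ u i ≤ Φ w i := by
    intro u w huw i
    simp only [hΦ]
    apply div_le_div_of_nonneg_right _ h2.le
    have h1 := huw (i+1)
    have h3 := huw (i-1)
    have h4 := huw i
    have h5 := hlip (i*h) (w i) ((w (i+1) - w (i-1)) / (2*h)) (u i) ((u (i+1) - u (i-1)) / (2*h))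
    have h6 : |(w (i+1) - w (i-1)) / (2*h) - (u (i+1) - u (i-1)) / (2*h)| ≤
        ((w (i+1) - u (i+1)) + (w (i-1) - u (i-1))) / (2*h) := by
      rw [← sub_div, abs_div, abs_of_pos (by linarith : 0 < 2*h)]
      apply div_le_div_of_nonneg_right _ (by linarith)
      rw [abs_le]; constructor <;> linarith
    rw [abs_of_nonneg (by linarith : 0 ≤ w i - u i)] at h5
    set gw := g (i*h) (w i) ((w (i+1) - w (i-1)) / (2*h))
    set gu := g (i*h) (u i) ((u (i+1) - u (i-1)) / (2*h))
    have hLp : 0 < L := by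
      by_contra hc
      nlinarith
    have h7 : h^2 * gw ≤ h^2 * (gu + L * ((w i - u i) + ((w (i+1) - u (i+1)) + (w (i-1) - u (i-1))) / (2*h))) := by
      apply mul_le_mul_of_nonneg_left _ (by positivity)
      refine h5.trans ?_
      gcongr
    have h8 : h^2 * (gu + L * ((w i - u i) + ((w (i+1) - u (i+1)) + (w (i-1) - u (i-1))) / (2*h)))
       = h^2 * gu + h * (L * h) * (w i - u i) + (L * h) * ((w (i+1) - u (i+1)) + (w (i-1) - u (i-1))) / 2 := by
      field_simp
      ring
    rw [h8, hL] at h7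
    linarith
  have hΦA : ∀ i, A ≤ Φ (fun _ => A) i := by
    intro i
    simp only [hΦ, sub_self, zero_div]
    rw [le_div_iff₀ h2]
    have := hA (i*h)
    have : h^2 * g (i*h) A 0 ≤ 0 := by nlinarith [sq_nonneg h]
    linarith
  have hΦB : ∀ i, Φ (fun _ => B) i ≤ B := by
    intro i
    simp only [hΦ, sub_self, zero_div]
    rw [div_le_iff₀ h2]
    have := hB (i*h)
    have : 0 ≤ h^2 * g (i*h) B 0 := by positivity
    linarith
  have hΦper : ∀ u : ℤ → ℝ, (∀ i, u (i+n) = u i) → ∀ i, Φ u (i+n) = Φ u i := by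
    intro u hu i
    simp only [hΦ]
    have e1 : u (i + n + 1) = u (i+1) := by rw [← hu (i+1)]; congr 1; ring
    have e2 : u (i + n - 1) = u (i-1) := by rw [← hu (i-1)]; congr 1; ring
    have e3 : (((i + n : ℤ)) : ℝ) * h = i * h + T := by push_cast; rw [← hnT]; ring
    rw [e1, e2, e3, hu, hper]
  set S : Set (ℤ → ℝ) := {w | (∀ i, w (i+n) = w i) ∧ (∀ i, A ≤ w i ∧ w i ≤ B) ∧ ∀ i, w i ≤ Φ w i} with hS
  have hAS : (fun _ => A) ∈ S := ⟨fun _ => rfl, fun _ => ⟨le_refl _, hAB⟩, hΦA⟩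
  have hne : Nonempty S := ⟨⟨_, hAS⟩⟩
  set u : ℤ → ℝ := fun i => ⨆ w : S, w.1 i with hu
  have hbdd : ∀ i, BddAbove (range fun w : S => w.1 i) := by
    intro i
    refine ⟨B, ?_⟩
    rintro _ ⟨w, rfl⟩
    exact (w.2.2.1 i).2
  have hle : ∀ w ∈ S, ∀ i, w i ≤ u i := fun w hw i => le_ciSup (hbdd i) ⟨w, hw⟩
  have huper : ∀ i, u (i+n) = u i := by
    intro i
    simp only [hu]
    congr 1
    ext w
    exact w.2.1 i
  have huA : ∀ i, A ≤ u i := fun i => hle _ hAS i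
  have huB : ∀ i, u i ≤ B := fun i => ciSup_le fun w => (w.2.2.1 i).2
  have huΦ : ∀ i, u i ≤ Φ u i := fun i =>
    ciSup_le fun w => (w.2.2.2 i).trans (hmono _ _ (hle _ w.2) i)
  have hmem : Φ u ∈ S := by
    refine ⟨hΦper u huper, fun i => ⟨(huA i).trans (huΦ i), ?_⟩, hmono _ _ huΦ⟩
    exact (hmono _ _ huB i).trans (hΦB i)
  refine ⟨u, huper, fun i => ⟨huA i, huB i⟩, fun i => ?_⟩
  have he : u i = Φ u i := le_antisymm (huΦ i) (hle _ hmem i)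
  simp only [hΦ] at he
  rw [eq_div_iff h2.ne'] at he
  linarith

/-- discrete estimates, on a forward range -/
lemma disc_est (u d : ℤ → ℝ) (h M : ℝ) (hh : 0 < h) (hM : 0 ≤ M)
    (hd : ∀ i, u (i+1) = u i + h * d i)
    (hdd : ∀ i, |d (i+1) - d i| ≤ h * M) (i : ℤ) (k : ℕ) :
    |d (i+k) - d i| ≤ M * (k*h) ∧ |u (i+k) - u i - (k*h) * d i| ≤ M * (k*h)^2 := by
  induction k with
  | zero => simp
  | succ k ih =>
    obtain ⟨h1, h2⟩ := ih
    have e : i + ((k+1 : ℕ) : ℤ) = (i + k) + 1 := by push_cast; ring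
    rw [e, hd]
    have h3 := hdd (i+k)
    have hkh : 0 ≤ k * h := by positivity
    have hp : 0 ≤ M * (k*h) * h := by positivity
    have hp2 : 0 ≤ M * h * h := by positivity
    have h4 : |h * (d (i+k) - d i)| ≤ h * (M * (k*h)) := by
      rw [abs_mul, abs_of_pos hh]
      exact mul_le_mul_of_nonneg_left h1 hh.le
    rw [abs_le] at h1 h2 h3 h4
    push_cast
    constructor
    · rw [abs_le]; constructor <;> nlinarith
    · rw [abs_le]; constructor <;> nlinarith

lemma disc_est2 (d : ℤ → ℝ) (h G ε : ℝ) (i : ℤ) (k : ℕ)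
    (hdd : ∀ j, i ≤ j → j < i + k → |d (j+1) - d j - h * G| ≤ h * ε) :
    |d (i+k) - d i - (k*h) * G| ≤ (k*h) * ε := by
  induction k with
  | zero => simp
  | succ k ih =>
    have h1 := ih (fun j hj hj' => hdd j hj (by push_cast; linarith))
    have h2 := hdd (i+k) (by linarith [Int.natCast_nonneg k]) (by push_cast; linarith)
    have e : i + ((k+1 : ℕ) : ℤ) = (i + k) + 1 := by push_cast; ring
    rw [e]
    rw [abs_le] at *
    push_cast
    constructor <;> nlinarith

/-- inf-convolution -/
noncomputable def infc (L : ℝ) (F : ℝ → ℝ → ℝ → ℝ) (t x y : ℝ) : ℝ :=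
  ⨅ q : ℝ × ℝ, (F t q.1 q.2 + L * (|x - q.1| + |y - q.2|))

lemma infc_bdd (L M : ℝ) (hL : 0 ≤ L) (F : ℝ → ℝ → ℝ → ℝ) (hF : ∀ t x y, |F t x y| ≤ M) (t x y : ℝ) :
    BddBelow (range fun q : ℝ × ℝ => (F t q.1 q.2 + L * (|x - q.1| + |y - q.2|))) := by
  refine ⟨-M, ?_⟩
  rintro _ ⟨q, rfl⟩
  have := (abs_le.1 (hF t q.1 q.2)).1
  have : 0 ≤ L * (|x - q.1| + |y - q.2|) := by positivity
  simp only
  linarith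

lemma infc_le (L M : ℝ) (hL : 0 ≤ L) (F : ℝ → ℝ → ℝ → ℝ) (hF : ∀ t x y, |F t x y| ≤ M) (t x y x' y': ℝ) :
    infc L F t x y ≤ F t x' y' + L * (|x - x'| + |y - y'|) :=
  ciInf_le (infc_bdd L M hL F hF t x y) (x', y')

lemma infc_le_self (L M : ℝ) (hL : 0 ≤ L) (F : ℝ → ℝ → ℝ → ℝ) (hF : ∀ t x y, |F t x y| ≤ M) (t x y : ℝ) :
    infc L F t x y ≤ F t x y := by
  simpa using infc_le L M hL F hF t x y x y

lemma le_infc (L : ℝ) (F : ℝ → ℝ → ℝ → ℝ) (t x y c : ℝ)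
    (H : ∀ x' y', c ≤ F t x' y' + L * (|x - x'| + |y - y'|)) : c ≤ infc L F t x y :=
  le_ciInf fun q => H q.1 q.2

lemma infc_abs (L M : ℝ) (hL : 0 ≤ L) (F : ℝ → ℝ → ℝ → ℝ) (hF : ∀ t x y, |F t x y| ≤ M) (t x y : ℝ) :
    |infc L F t x y| ≤ M := by
  rw [abs_le]
  constructor
  · apply le_infc
    intro x' y'
    have := (abs_le.1 (hF t x' y')).1
    have : 0 ≤ L * (|x - x'| + |y - y'|) := by positivity
    linarith
  · exact (infc_le_self L M hL F hF t x y).trans (abs_le.1 (hF t x y)).2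

lemma infc_lip (L M : ℝ) (hL : 0 ≤ L) (F : ℝ → ℝ → ℝ → ℝ) (hF : ∀ t x y, |F t x y| ≤ M) (t x y x' y': ℝ) :
    infc L F t x y ≤ infc L F t x' y' + L * (|x - x'| + |y - y'|) := by
  rw [← sub_le_iff_le_add]
  apply le_infc
  intro a b
  have h1 := infc_le L M hL F hF t x y a b
  have h2 : L * (|x - a| + |y - b|) ≤ L * ((|x - x'| + |x' - a|) + (|y - y'| + |y' - b|)) := by
    gcongr
    · exact abs_sub_le _ _ _
    · exact abs_sub_le _ _ _
  linarith

lemma infc_conv (M : ℝ) (F : ℝ → ℝ → ℝ → ℝ) (hF : ∀ t x y, |F t x y| ≤ M)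
    (hc : Continuous fun p : ℝ × ℝ × ℝ => F p.1 p.2.1 p.2.2)
    (L : ℕ → ℝ) (hL0 : ∀ n, 0 ≤ L n) (hL : Tendsto L atTop atTop) (t x y ε : ℝ) (hε : 0 < ε) :
    ∃ η > 0, ∀ᶠ n in atTop, ∀ t' x' y', |t' - t| < η → |x' - x| < η → |y' - y| < η →
      |infc (L n) F t' x' y' - F t x y| ≤ ε := by
  have hca := Metric.continuousAt_iff.1 (hc.continuousAt (x := (t, x, y))) ε hε
  obtain ⟨r, hr, H⟩ := hca
  have H' : ∀ t' x' y', |t' - t| < r → |x' - x| < r → |y' - y| < r → |F t' x' y' - F t x y| < ε := by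
    intro t' x' y' h1 h2 h3
    have := @H (t', x', y') (by simp [Prod.dist_eq, Real.dist_eq, h1, h2, h3])
    simpa [Real.dist_eq] using this
  refine ⟨r/2, by positivity, ?_⟩
  filter_upwards [hL.eventually_ge_atTop (2 * M / (r/2))] with n hn t' x' y' h1 h2 h3
  rw [abs_le]
  constructor
  · suffices F t x y - ε ≤ infc (L n) F t' x' y' by linarith
    apply le_infc
    intro a b
    by_cases hab : |x' - a| < r/2 ∧ |y' - b| < r/2
    · have h4 : |a - x| < r := by
        have := abs_sub_le a x' x
        rw [abs_sub_comm a x'] at this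
        linarith [hab.1]
      have h5 : |b - y| < r := by
        have := abs_sub_le b y' y
        rw [abs_sub_comm b y'] at this
        linarith [hab.2]
      have h6 := (abs_lt.1 (H' t' a b (by linarith) h4 h5)).1
      have : 0 ≤ L n * (|x' - a| + |y' - b|) := mul_nonneg (hL0 n) (by positivity)
      linarith
    · have h4 : r/2 ≤ |x' - a| + |y' - b| := by
        by_contra hcon
        apply hab
        constructor <;> linarith [abs_nonneg (x' - a), abs_nonneg (y'-b)]
      have h5 : 2 * M ≤ L n * (|x' - a| + |y' - b|) := by
        rw [div_le_iff₀ (by positivity)] at hn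
        exact hn.trans (mul_le_mul_of_nonneg_left h4 (hL0 n))
      have := (abs_le.1 (hF t' a b)).1
      have := (abs_le.1 (hF t x y)).2
      linarith
  · have h4 := infc_le_self (L n) M (hL0 n) F hF t' x' y'
    have h6 := (abs_lt.1 (H' t' x' y' (by linarith) (by linarith) (by linarith))).2
    linarith

/-- max principle -/
lemma max_princ (T : ℝ) (hT : 0 < T) (z z' z'' : ℝ → ℝ) (hper : Function.Periodic z T)
    (h1 : ∀ t, HasDerivAt z (z' t) t) (h2 : ∀ t, HasDerivAt z' (z'' t) t)
    (H : ∀ t, 0 ≤ z t → z' t = 0 → 0 < z'' t) (t : ℝ) : z t < 0 := by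
  have hcont : Continuous z := continuous_iff_continuousAt.2 fun t => (h1 t).continuousAt
  obtain ⟨t0, ht0, hmax⟩ := isCompact_Icc.exists_isMaxOn (nonempty_Icc.2 hT.le) hcont.continuousOn
  have hmax' : ∀ s, z s ≤ z t0 := by
    intro s
    obtain ⟨y, hy, he⟩ := hper.exists_mem_Ico₀ hT s
    rw [he]
    exact hmax ⟨hy.1, hy.2.le⟩
  by_contra hcon
  have hz0 : 0 ≤ z t0 := (not_lt.1 hcon).trans (hmax' t)
  have hlm : IsLocalMax z t0 := Eventually.of_forall hmax'
  have hz' : z' t0 = 0 := hlm.hasDerivAt_eq_zero (h1 t0)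
  have hp := H t0 hz0 hz'
  have hd1 : deriv z = z' := funext fun t => (h1 t).deriv
  have hd2 : deriv (deriv z) t0 = z'' t0 := by rw [hd1]; exact (h2 t0).deriv
  have hlmin := isLocalMin_of_deriv_deriv_pos (by rw [hd2]; exact hp) (by rw [hd1, hz']) hcont.continuousAt
  have heq : z =ᶠ[𝓝 t0] fun _ => z t0 := by
    filter_upwards [hlmin] with s hs
    exact le_antisymm (hmax' s) hs
  have h3 := heq.deriv.deriv
  have h4 := h3.eq_of_nhds
  rw [hd2] at h4
  simp at h4
  linarith

/-- Nagumo one sided -/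
lemma nagumo (x p q : ℝ → ℝ) (C m₁ m₂ : ℝ) (hC : 0 ≤ C)
    (hx : ∀ t, HasDerivAt x (p t) t) (hp : ∀ t, HasDerivAt p (q t) t)
    (hq : ∀ t, |q t| ≤ C * (1 + p t ^ 2)) (hb : ∀ t, m₁ ≤ x t ∧ x t ≤ m₂)
    (t s : ℝ) (hst : s ≤ t) (hs : p s ≤ 0) : p t ≤ Real.exp (2 * C * (m₂ - m₁)) := by
  by_cases hpt : p t ≤ 0
  · exact hpt.trans (Real.exp_pos _).le
  push Not at hpt
  have hcont : Continuous p := continuous_iff_continuousAt.2 fun t => (hp t).continuousAt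
  have hxcont : Continuous x := continuous_iff_continuousAt.2 fun t => (hx t).continuousAt
  -- last zero before t
  have hK : IsCompact (Icc s t ∩ {r | p r ≤ 0}) :=
    isCompact_Icc.inter_right (isClosed_le hcont continuous_const)
  obtain ⟨r, ⟨hr1, hr2⟩, hr⟩ := hK.exists_isMaxOn (f := id) ⟨s, ⟨le_refl _, hst⟩, hs⟩ continuousOn_id
  have hrt : r < t := lt_of_le_of_ne hr1.2 (by rintro rfl; exact absurd hr2 (not_le.2 hpt))
  have hpos : ∀ τ ∈ Ioc r t, 0 < p τ := by
    intro τ hτ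
    by_contra hcon
    have := hr ⟨⟨hr1.1.trans hτ.1.le, hτ.2⟩, not_lt.1 hcon⟩
    simp at this
    linarith [hτ.1]
  have hpr : p r = 0 := by
    apply le_antisymm hr2
    have : Tendsto p (𝓝[>] r) (𝓝 (p r)) := hcont.continuousAt.tendsto.mono_left nhdsWithin_le_nhds
    apply ge_of_tendsto this
    filter_upwards [Ioc_mem_nhdsGT hrt] with τ hτ using (hpos τ hτ).le
  have hder : ∀ τ, HasDerivAt (fun τ => Real.log (1 + p τ ^ 2) - 2 * C * x τ)
      ((2 * p τ * q τ) / (1 + p τ ^ 2) - 2 * C * p τ) τ := by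
    intro τ
    have h1 : HasDerivAt (fun τ => 1 + p τ ^ 2) (2 * p τ * q τ) τ := by
      have := ((hp τ).pow 2).const_add 1
      simpa using this
    exact (h1.log (by positivity)).sub ((hx τ).const_mul _)
  have hanti : AntitoneOn (fun τ => Real.log (1 + p τ ^ 2) - 2 * C * x τ) (Icc r t) := by
    apply antitoneOn_of_deriv_nonpos (convex_Icc r t)
    · exact fun τ _ => (hder τ).continuousAt.continuousWithinAt
    · exact fun τ _ => (hder τ).differentiableAt.differentiableWithinAt
    · intro τ hτ
      rw [interior_Icc] at hτ
      rw [(hder τ).deriv]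
      have hpτ := hpos τ ⟨hτ.1, hτ.2.le⟩
      have : (2 * p τ * q τ) / (1 + p τ ^ 2) ≤ 2 * C * p τ := by
        rw [div_le_iff₀ (by positivity)]
        have := (abs_le.1 (hq τ)).2
        nlinarith
      linarith
  have h1 := hanti ⟨le_refl _, hrt.le⟩ ⟨hrt.le, le_refl _⟩ hrt.le
  simp only [hpr] at h1
  norm_num at h1
  have h2 : Real.log (1 + p t ^ 2) ≤ 2 * C * (m₂ - m₁) := by
    have := (hb r).1
    have := (hb t).2
    nlinarith
  rw [Real.log_le_iff_le_exp (by positivity)] at h2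
  nlinarith [sq_nonneg (p t - 1)]

/-- two sided versions -/
lemma disc_d_abs (u d : ℤ → ℝ) (h M : ℝ) (hh : 0 < h) (hM : 0 ≤ M)
    (hd : ∀ i, u (i+1) = u i + h * d i)
    (hdd : ∀ i, |d (i+1) - d i| ≤ h * M) (i j : ℤ) :
    |d j - d i| ≤ M * |j * h - i * h| := by
  wlog hij : i ≤ j generalizing i j
  · rw [abs_sub_comm, abs_sub_comm (j * h)]
    exact this j i (le_of_not_ge hij)
  obtain ⟨k, rfl⟩ := Int.le.dest hij
  have := (disc_est u d h M hh hM hd hdd i k).1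
  have e : ((i + k : ℤ) : ℝ) * h - i * h = k * h := by push_cast; ring
  rw [e, abs_of_nonneg (by positivity : 0 ≤ (k:ℝ) * h)]
  exact this

lemma disc_u_abs (u d : ℤ → ℝ) (h D : ℝ) (hh : 0 < h)
    (hd : ∀ i, u (i+1) = u i + h * d i)
    (hD : ∀ i, |d i| ≤ D) (i j : ℤ) :
    |u j - u i| ≤ D * |j * h - i * h| := by
  wlog hij : i ≤ j generalizing i j
  · rw [abs_sub_comm, abs_sub_comm (j * h)]
    exact this j i (le_of_not_ge hij)
  obtain ⟨k, rfl⟩ := Int.le.dest hij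
  have e : ((i + k : ℤ) : ℝ) * h - i * h = k * h := by push_cast; ring
  rw [e, abs_of_nonneg (by positivity : 0 ≤ (k:ℝ) * h)]
  have := disc_est2 u h 0 D i k (by
    intro j _ _
    rw [hd]
    simp only [mul_zero, sub_zero, add_sub_cancel_left, abs_mul, abs_of_pos hh]
    exact mul_le_mul_of_nonneg_left (hD j) hh.le)
  simp only [mul_zero, sub_zero] at this
  linarith

lemma disc_d_bound (u d : ℤ → ℝ) (h M T : ℝ) (n : ℕ) (hh : 0 < h) (hM : 0 ≤ M) (hT : 0 < T)
    (hnT : n * h = T) (hper : ∀ i, u (i + n) = u i)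
    (hd : ∀ i, u (i+1) = u i + h * d i)
    (hdd : ∀ i, |d (i+1) - d i| ≤ h * M) (i : ℤ) : |d i| ≤ M * T := by
  have := (disc_est u d h M hh hM hd hdd i n).2
  rw [hper, hnT, sub_self, zero_sub, abs_neg, abs_mul, abs_of_pos hT] at this
  have h2 : T * |d i| ≤ T * (M * T) := by linarith
  exact le_of_mul_le_mul_left h2 hT

lemma ultra_lim (U : Ultrafilter ℕ) (f : ℕ → ℝ) (R : ℝ) (hf : ∀ n, |f n| ≤ R) :
    ∃ l, Tendsto f U (𝓝 l) := by
  have hc : IsCompact (Icc (-R) R) := isCompact_Icc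
  obtain ⟨l, _, hl⟩ := hc.ultrafilter_le_nhds (U.map f) (by
    rw [Ultrafilter.coe_map]
    exact tendsto_principal.2 (Eventually.of_forall fun n => abs_le.1 (hf n)))
  exact ⟨l, hl⟩

lemma limit_lemma (T : ℝ) (hT : 0 < T) (M R : ℝ) (hM : 0 ≤ M) (h : ℕ → ℝ) (m : ℕ → ℕ)
    (hh : ∀ n, 0 < h n) (hmT : ∀ n, m n * h n = T) (hh0 : Tendsto h atTop (𝓝 0))
    (u : ℕ → ℤ → ℝ) (hper : ∀ n i, u n (i + m n) = u n i) (hR : ∀ n i, |u n i| ≤ R)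
    (g : ℕ → ℝ → ℝ → ℝ → ℝ) (hg : ∀ n t x y, |g n t x y| ≤ M)
    (heq : ∀ n i, u n (i+1) + u n (i-1) - 2 * u n i =
        (h n)^2 * g n (i * h n) (u n i) ((u n (i+1) - u n (i-1)) / (2*h n)))
    (F : ℝ → ℝ → ℝ → ℝ)
    (hconv : ∀ t x y ε, 0 < ε → ∃ η > 0, ∀ᶠ n in atTop, ∀ t' x' y',
      |t' - t| < η → |x' - x| < η → |y' - y| < η → |g n t' x' y' - F t x y| ≤ ε) :
    ∃ x p : ℝ → ℝ, Function.Periodic x T ∧ (∀ t, HasDerivAt x (p t) t) ∧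
      ∀ t, HasDerivAt p (F t (x t) (p t)) t := by
  set U : Ultrafilter ℕ := hyperfilter ℕ
  have hU : (U : Filter ℕ) ≤ atTop := by
    rw [← Nat.cofinite_eq_atTop]; exact hyperfilter_le_cofinite
  set d : ℕ → ℤ → ℝ := fun n i => (u n (i+1) - u n i) / h n with hddef
  have hd : ∀ n i, u n (i+1) = u n i + h n * d n i := by
    intro n i
    simp only [hddef]
    rw [mul_div_cancel₀ _ (hh n).ne']; ring
  have hcen : ∀ n i, (u n (i+1) - u n (i-1)) / (2 * h n) = (d n i + d n (i-1)) / 2 := by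
    intro n i
    have h1 := hd n i
    have h2 := hd n (i-1)
    rw [sub_add_cancel] at h2
    have : u n (i+1) - u n (i-1) = h n * (d n i + d n (i-1)) := by linarith
    rw [this]
    have := (hh n).ne'
    field_simp
  have heq' : ∀ n i, d n (i+1) - d n i = h n * g n ((i+1 : ℤ) * h n) (u n (i+1)) ((d n (i+1) + d n i)/2) := by
    intro n i
    have h1 := heq n (i+1)
    rw [hcen] at h1
    have h2 := hd n (i+1)
    have h3 := hd n i
    rw [add_sub_cancel_right] at h1
    have h4 : h n * (d n (i+1) - d n i) = h n * (h n * g n ((i+1 : ℤ) * h n) (u n (i+1)) ((d n (i+1) + d n i)/2)) := by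
      linarith
    exact mul_left_cancel₀ (hh n).ne' h4
  have hdd : ∀ n i, |d n (i+1) - d n i| ≤ h n * M := by
    intro n i
    rw [heq', abs_mul, abs_of_pos (hh n)]
    exact mul_le_mul_of_nonneg_left (hg _ _ _ _) (hh n).le
  have hD : ∀ n i, |d n i| ≤ M * T := fun n i =>
    disc_d_bound (u n) (d n) (h n) M T (m n) (hh n) hM hT (hmT n) (hper n) (hd n) (hdd n) i
  set ι : ℕ → ℝ → ℤ := fun n t => ⌊t / h n⌋ with hι
  have hι1 : ∀ n t, ι n t * h n ≤ t := by
    intro n t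
    have := Int.floor_le (t / h n)
    rwa [le_div_iff₀ (hh n)] at this
  have hι2 : ∀ n t, t - h n ≤ ι n t * h n := by
    intro n t
    have := (Int.lt_floor_add_one (t / h n)).le
    rw [div_le_iff₀ (hh n)] at this
    simp only [hι]
    linarith
  have hιmono : ∀ n s t, s ≤ t → ι n s ≤ ι n t := by
    intro n s t hst
    exact Int.floor_le_floor (div_le_div_of_nonneg_right hst (hh n).le)
  have hhU : Tendsto h U (𝓝 0) := hh0.mono_left hU
  have hιlim : ∀ t, Tendsto (fun n => ι n t * h n) U (𝓝 t) := by
    intro t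
    refine tendsto_of_tendsto_of_tendsto_of_le_of_le (g := fun n => t - h n) (h := fun _ => t) ?_ tendsto_const_nhds
      (fun n => hι2 n t) (fun n => hι1 n t)
    simpa using tendsto_const_nhds.sub hhU
  choose x hx using fun t => ultra_lim U (fun n => u n (ι n t)) R (fun n => hR n _)
  choose p hp using fun t => ultra_lim U (fun n => d n (ι n t)) (M*T) (fun n => hD n _)
  have hplip : ∀ s t, |p t - p s| ≤ M * |t - s| := by
    intro s t
    refine le_of_tendsto_of_tendsto' ((hp t).sub (hp s)).abs
      ((((hιlim t).sub (hιlim s)).abs).const_mul M) (fun n => ?_)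
    exact disc_d_abs (u n) (d n) (h n) M (hh n) hM (hd n) (hdd n) _ _
  have hxq : ∀ s t, s ≤ t → |x t - x s - (t - s) * p s| ≤ M * (t - s)^2 := by
    intro s t hst
    refine le_of_tendsto_of_tendsto' (((hx t).sub (hx s)).sub (((hιlim t).sub (hιlim s)).mul (hp s))).abs
      ((((hιlim t).sub (hιlim s)).pow 2).const_mul M) (fun n => ?_)
    obtain ⟨k, hk⟩ := Int.le.dest (hιmono n s t hst)
    have := (disc_est (u n) (d n) (h n) M (hh n) hM (hd n) (hdd n) (ι n s) k).2
    have e : (ι n t : ℝ) * h n - ι n s * h n = k * h n := by rw [← hk]; push_cast; ring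
    rw [e, ← hk]
    exact this
  refine ⟨x, p, ?_, ?_, ?_⟩
  · intro t
    have e : ∀ n, ι n (t + T) = ι n t + m n := by
      intro n
      simp only [hι]
      rw [← hmT n, add_div, mul_div_cancel_right₀ _ (hh n).ne', Int.floor_add_natCast]
    have h1 := hx (t + T)
    simp only [e, hper] at h1
    exact tendsto_nhds_unique h1 (hx t)
  · intro s
    have hq2 : ∀ t, |x t - x s - (t - s) * p s| ≤ 2 * M * |t - s|^2 := by
      intro t
      rcases le_total s t with hst | hst
      · have := hxq s t hst
        rw [sq_abs]
        have : 0 ≤ M * (t - s)^2 := by positivity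
        linarith
      · have h1 := hxq t s hst
        have h2 := hplip s t
        have h3 : |(t - s) * (p t - p s)| ≤ M * |t - s|^2 := by
          rw [abs_mul]
          nlinarith [abs_nonneg (t - s)]
        rw [sq_abs] at *
        rw [abs_le] at *
        constructor <;> nlinarith
    rw [hasDerivAt_iff_isLittleO]
    have hO : (fun t => x t - x s - (t - s) • p s) =O[𝓝 s] fun t => |t - s|^2 := by
      refine Asymptotics.IsBigO.of_bound (2*M) (Eventually.of_forall fun t => ?_)
      rw [Real.norm_eq_abs, Real.norm_eq_abs, abs_of_nonneg (by positivity : 0 ≤ |t-s|^2)]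
      exact hq2 t
    refine hO.trans_isLittleO ?_
    rw [Asymptotics.isLittleO_iff]
    intro c hc
    filter_upwards [Metric.ball_mem_nhds s hc] with t ht
    rw [Metric.mem_ball, Real.dist_eq] at ht
    rw [Real.norm_eq_abs, Real.norm_eq_abs, abs_of_nonneg (by positivity : 0 ≤ |t-s|^2)]
    nlinarith [abs_nonneg (t - s)]
  · intro s
    have key : ∀ ε > 0, ∃ r > 0, ∀ t₁ t₂, |t₁ - s| < r → |t₂ - s| < r → t₁ ≤ t₂ →
        |p t₂ - p t₁ - (t₂ - t₁) * F s (x s) (p s)| ≤ (t₂ - t₁) * ε := by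
      intro ε hε
      obtain ⟨η, hη, hev⟩ := hconv s (x s) (p s) ε hε
      set Q : ℝ := 1 + M + M * T with hQ
      have hMT : 0 ≤ M * T := by positivity
      have hQ1 : 1 ≤ Q := by linarith
      have hQ0 : 0 < Q := by linarith
      refine ⟨η / (4 * Q), by positivity, fun t₁ t₂ ht₁ ht₂ h12 => ?_⟩
      refine le_of_tendsto_of_tendsto
        (((hp t₂).sub (hp t₁)).sub (((hιlim t₂).sub (hιlim t₁)).mul_const (F s (x s) (p s)))).abs
        (((hιlim t₂).sub (hιlim t₁)).mul_const ε) ?_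
      have ev1 : ∀ᶠ n in (U : Filter ℕ), h n < η / (8 * Q) := hhU.eventually_lt_const (by positivity)
      have ev2 : ∀ᶠ n in (U : Filter ℕ), |u n (ι n s) - x s| < η / 4 := by
        have := (Metric.tendsto_nhds.1 (hx s)) (η/4) (by positivity)
        simpa [Real.dist_eq] using this
      have ev3 : ∀ᶠ n in (U : Filter ℕ), |d n (ι n s) - p s| < η / 4 := by
        have := (Metric.tendsto_nhds.1 (hp s)) (η/4) (by positivity)
        simpa [Real.dist_eq] using this
      filter_upwards [ev1, ev2, ev3, hev.filter_mono hU] with n e1 e2 e3 e4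
      obtain ⟨k, hk⟩ := Int.le.dest (hιmono n t₁ t₂ h12)
      have e : (ι n t₂ : ℝ) * h n - ι n t₁ * h n = k * h n := by rw [← hk]; push_cast; ring
      rw [e, ← hk]
      apply disc_est2
      intro j hj1 hj2
      rw [heq', ← mul_sub, abs_mul, abs_of_pos (hh n)]
      apply mul_le_mul_of_nonneg_left _ (hh n).le
      -- closeness of all grid points between
      have hηQ : η / (4*Q) * Q = η/4 := by field_simp
      have hηQ8 : η / (8*Q) * Q = η/8 := by field_simp
      have hA0 : 0 < η / (4*Q) := by positivity
      have hB0 : 0 < η / (8*Q) := by positivity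
      rw [abs_lt] at ht₁ ht₂
      have hclose : ∀ i : ℤ, ι n t₁ ≤ i → i ≤ ι n t₂ → |i * h n - s| ≤ η/(4*Q) + h n ∧
          |i * h n - ι n s * h n| ≤ η/(4*Q) + η/(4*Q) := by
        intro i hi1 hi2
        have a1 : (ι n t₁ : ℝ) * h n ≤ i * h n :=
          mul_le_mul_of_nonneg_right (by exact_mod_cast hi1) (hh n).le
        have a2 : (i : ℝ) * h n ≤ ι n t₂ * h n :=
          mul_le_mul_of_nonneg_right (by exact_mod_cast hi2) (hh n).le
        have a3 := hι1 n t₂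
        have a4 := hι2 n t₁
        have a5 := hι1 n s
        have a6 := hι2 n s
        have a7 : η/(4*Q) = 2 * (η/(8*Q)) := by field_simp; norm_num
        have := hh n
        constructor <;> rw [abs_le] <;> constructor <;> linarith
      have hj2' : j + 1 ≤ ι n t₂ := by omega
      have c1 := hclose (j+1) (by omega) hj2'
      have c0 := hclose j hj1 (by omega)
      have hdc : ∀ i : ℤ, |i * h n - ι n s * h n| ≤ η/(4*Q) + η/(4*Q) → |d n i - p s| < η := by
        intro i hi
        have b1 := disc_d_abs (u n) (d n) (h n) M (hh n) hM (hd n) (hdd n) (ι n s) i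
        have b2 : M * |i * h n - ι n s * h n| ≤ Q * (η/(4*Q) + η/(4*Q)) := by
          apply mul_le_mul (by linarith) hi (abs_nonneg _) hQ0.le
        have b3 := abs_sub_le (d n i) (d n (ι n s)) (p s)
        nlinarith
      apply e4
      · refine lt_of_le_of_lt c1.1 ?_
        have : η/(4*Q) * 1 ≤ η/(4*Q) * Q := mul_le_mul_of_nonneg_left hQ1 hA0.le
        have : η/(8*Q) * 1 ≤ η/(8*Q) * Q := mul_le_mul_of_nonneg_left hQ1 hB0.le
        linarith
      · have b1 := disc_u_abs (u n) (d n) (h n) (M*T) (hh n) (hd n) (hD n) (ι n s) (j+1)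
        have b2 : (M*T) * |(j+1 : ℤ) * h n - ι n s * h n| ≤ Q * (η/(4*Q) + η/(4*Q)) := by
          apply mul_le_mul (by linarith) c1.2 (abs_nonneg _) hQ0.le
        have b3 := abs_sub_le (u n (j+1)) (u n (ι n s)) (x s)
        nlinarith
      · have q1 := hdc (j+1) c1.2
        have q0 := hdc j c0.2
        rw [abs_lt] at *
        constructor <;> linarith
    rw [hasDerivAt_iff_isLittleO, Asymptotics.isLittleO_iff]
    intro c hc
    obtain ⟨r, hr, H⟩ := key c hc
    filter_upwards [Metric.ball_mem_nhds s hr] with t ht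
    rw [Metric.mem_ball, Real.dist_eq] at ht
    rw [Real.norm_eq_abs, Real.norm_eq_abs, smul_eq_mul]
    rcases le_total s t with hst | hst
    · have := H s t (by simpa using hr) ht hst
      rw [abs_of_nonneg (by linarith : 0 ≤ t - s)]
      linarith
    · have := H t s ht (by simpa using hr) hst
      rw [abs_of_nonpos (by linarith : t - s ≤ 0)]
      rw [← abs_neg]
      have e : -(p t - p s - (t - s) * F s (x s) (p s)) = p s - p t - (s - t) * F s (x s) (p s) := by ring
      rw [e]
      linarith

theorem bounded_exists (T : ℝ) (hT : 0 < T) (M R : ℝ) (hM : 0 ≤ M) (hR : 0 ≤ R)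
    (F : ℝ → ℝ → ℝ → ℝ) (hc : Continuous fun p : ℝ × ℝ × ℝ => F p.1 p.2.1 p.2.2)
    (hper : ∀ t x y, F (t + T) x y = F t x y) (hF : ∀ t x y, |F t x y| ≤ M)
    (hup : ∀ t x y, R ≤ x → 0 ≤ F t x y) (hlow : ∀ t x y, x ≤ -R → F t x y ≤ 0) :
    ∃ x p : ℝ → ℝ, Function.Periodic x T ∧ (∀ t, HasDerivAt x (p t) t) ∧
      ∀ t, HasDerivAt p (F t (x t) (p t)) t := by
  obtain ⟨n0, hn0⟩ := exists_nat_ge (M * T)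
  set m : ℕ → ℕ := fun n => n + n0 + 1 with hm
  have hm0 : ∀ n, (0:ℝ) < m n := by intro n; simp only [hm]; positivity
  have hmlim : Tendsto (fun n => (m n : ℝ)) atTop atTop := by
    apply tendsto_natCast_atTop_atTop.comp
    apply tendsto_atTop_mono (f := id) (fun n => by simp only [hm, id]; omega) tendsto_id
  set L : ℕ → ℝ := fun n => m n / T with hL
  set h : ℕ → ℝ := fun n => T / m n with hhdef
  have hh : ∀ n, 0 < h n := fun n => div_pos hT (hm0 n)
  have hL0 : ∀ n, 0 ≤ L n := fun n => (div_pos (hm0 n) hT).le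
  have hLM : ∀ n, M ≤ L n := by
    intro n
    simp only [hL, hm]
    rw [le_div_iff₀ hT]
    push_cast
    have : (0:ℝ) ≤ n := by positivity
    linarith
  have hLh : ∀ n, L n * h n = 1 := by
    intro n
    simp only [hL, hhdef]
    have := (hm0 n).ne'
    field_simp
  have hmT : ∀ n, m n * h n = T := by
    intro n
    simp only [hhdef]
    have := (hm0 n).ne'
    field_simp
  have hlow' : ∀ n t, infc (L n) F t (-R) 0 ≤ 0 := fun n t =>
    (infc_le_self (L n) M (hL0 n) F hF _ _ _).trans (hlow _ _ _ le_rfl)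
  have hup' : ∀ n t, 0 ≤ infc (L n) F t (R+1) 0 := by
    intro n t
    apply le_infc
    intro x' y'
    by_cases hx' : R ≤ x'
    · have := hup t x' y' hx'
      have : 0 ≤ L n * (|R + 1 - x'| + |0 - y'|) := mul_nonneg (hL0 n) (by positivity)
      linarith
    · have h1 : 1 ≤ |R + 1 - x'| + |0 - y'| := by
        have := le_abs_self (R + 1 - x')
        have := abs_nonneg (0 - y')
        linarith
      have h2 : L n * 1 ≤ L n * (|R + 1 - x'| + |0 - y'|) := mul_le_mul_of_nonneg_left h1 (hL0 n)
      have := (abs_le.1 (hF t x' y')).1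
      have := hLM n
      linarith
  have hex := fun n => disc_exists T (h n) (L n) (-R) (R+1) (m n) (hh n) (hmT n) (hLh n) (by linarith)
    (infc (L n) F) (by intro t x y; simp only [infc, hper]) (infc_lip (L n) M (hL0 n) F hF) (hlow' n) (hup' n)
  choose u hu1 hu2 hu3 using hex
  refine limit_lemma T hT M (R+1) hM h m hh hmT (hmlim.const_div_atTop T) u hu1 ?_
    (fun n => infc (L n) F) (fun n => infc_abs (L n) M (hL0 n) F hF) hu3 F ?_
  · intro n i
    rw [abs_le]
    constructor <;> linarith [(hu2 n i).1, (hu2 n i).2]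
  · intro t x y ε hε
    exact infc_conv M F hF hc L hL0 (hmlim.atTop_div_const hT) t x y ε hε

lemma periodic_bdd (T : ℝ) (hT : 0 < T) (f : ℝ → ℝ) (hf : Continuous f) (hp : Function.Periodic f T) :
    ∃ C, 0 ≤ C ∧ ∀ t, |f t| ≤ C := by
  obtain ⟨C, hC⟩ := isCompact_Icc.exists_bound_of_continuousOn (s := Icc 0 T) hf.continuousOn
  have H : ∀ t, |f t| ≤ C := by
    intro t
    obtain ⟨y, hy, he⟩ := hp.exists_mem_Ico₀ hT t
    rw [he]
    exact hC y ⟨hy.1, hy.2.le⟩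
  exact ⟨C, (abs_nonneg _).trans (H 0), H⟩

lemma periodic_deriv (T : ℝ) (f f' : ℝ → ℝ) (h : ∀ t, HasDerivAt f (f' t) t) (hp : Function.Periodic f T) :
    Function.Periodic f' T := by
  intro t
  have h1 : HasDerivAt (fun s => f (s + T)) (f' (t + T)) t := (h (t+T)).comp_add_const t T
  rw [show (fun s => f (s + T)) = f from funext hp] at h1
  exact h1.unique (h t)

lemma quad_growth (T : ℝ) (hT : 0 < T)
    (v : ℝ → ℝ → ℝ → ℝ)
    (hv_cont : Continuous fun p : ℝ × ℝ × ℝ => v p.1 p.2.1 p.2.2)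
    (hv_per : ∀ t x y, v (t + T) x y = v t x y)
    (a b : ℝ) (ha : 0 ≤ a) (hb : 0 ≤ b) (δ : ℝ) (hδ : 0 < δ)
    (hv_growth : ∀ t x y, |v t x y| ≤ a + b * |y| ^ (2 - δ)) (D : ℝ) :
    ∃ C, 0 ≤ C ∧ ∀ t x y, |x| ≤ D → |v t x y| ≤ C * (1 + y^2) := by
  obtain ⟨B, hB⟩ := (isCompact_Icc.prod (isCompact_Icc.prod isCompact_Icc)).exists_bound_of_continuousOn
    (s := Icc 0 T ×ˢ (Icc (-D) D ×ˢ Icc (-1:ℝ) 1)) hv_cont.continuousOn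
  refine ⟨a + b + |B|, by positivity, fun t x y hx => ?_⟩
  rcases le_total |y| 1 with hy | hy
  · obtain ⟨t', ht', he⟩ := Function.Periodic.exists_mem_Ico₀ (f := fun t => v t x y) (fun t => hv_per t x y) hT t
    rw [he]
    have := hB (t', x, y) ⟨⟨ht'.1, ht'.2.le⟩, abs_le.1 hx, abs_le.1 hy⟩
    simp only [Real.norm_eq_abs] at this
    have h1 := le_abs_self B
    have h2 : 0 ≤ (a + b + |B|) * y^2 := by positivity
    linarith
  · have h1 := hv_growth t x y
    have h2 : |y| ^ (2 - δ) ≤ y^2 := by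
      calc |y| ^ (2 - δ) ≤ |y| ^ (2:ℝ) := Real.rpow_le_rpow_of_exponent_le hy (by linarith)
        _ = y^2 := by rw [Real.rpow_two, sq_abs]
    have h3 : b * |y| ^ (2 - δ) ≤ b * y^2 := mul_le_mul_of_nonneg_left h2 hb
    have h4 : 0 ≤ (a + |B|) * y^2 := by positivity
    have := abs_nonneg B
    nlinarith

/-- Barrier theorem for the scalar second-order ODE `x'' = v(t, x, x')` with a
Nagumo-type sub-quadratic growth condition: strict periodic lower and upper
barriers yield a `T`-periodic solution between them. -/
theorem stmt_0
    (T : ℝ) (hT : 0 < T)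
    (v : ℝ → ℝ → ℝ → ℝ)
    (hv_cont : Continuous fun p : ℝ × ℝ × ℝ => v p.1 p.2.1 p.2.2)
    (hv_per : ∀ t x y, v (t + T) x y = v t x y)
    (a b : ℝ) (ha : 0 ≤ a) (hb : 0 ≤ b) (δ : ℝ) (hδ : 0 < δ)
    (hv_growth : ∀ t x y, |v t x y| ≤ a + b * |y| ^ (2 - δ))
    (x₁ x₂ : ℝ → ℝ)
    (hx₁ : ContDiff ℝ 2 x₁) (hx₂ : ContDiff ℝ 2 x₂)
    (hx₁_per : Function.Periodic x₁ T) (hx₂_per : Function.Periodic x₂ T)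
    (h_lt : ∀ t, x₁ t < x₂ t)
    (h_low : ∀ t, deriv (deriv x₁) t > v t (x₁ t) (deriv x₁ t))
    (h_up : ∀ t, deriv (deriv x₂) t < v t (x₂ t) (deriv x₂ t)) :
    ∃ x : ℝ → ℝ, ContDiff ℝ 2 x ∧ Function.Periodic x T ∧
      (∀ t, deriv (deriv x) t = v t (x t) (deriv x t)) ∧
      (∀ t, x₁ t < x t ∧ x t < x₂ t) := by
  have reg : ∀ f : ℝ → ℝ, ContDiff ℝ 2 f → (∀ t, HasDerivAt f (deriv f t) t) ∧
      (∀ t, HasDerivAt (deriv f) (deriv (deriv f) t) t) ∧ Continuous (deriv f) := by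
    intro f hf
    have hf1 : ContDiff ℝ 1 (deriv f) := (contDiff_succ_iff_deriv (n := 1).1 hf).2.2
    exact ⟨fun t => (hf.differentiable (by norm_num) t).hasDerivAt,
      fun t => (hf1.differentiable (by norm_num) t).hasDerivAt, hf1.continuous⟩
  obtain ⟨r11, r12, r13⟩ := reg x₁ hx₁
  obtain ⟨r21, r22, r23⟩ := reg x₂ hx₂
  obtain ⟨A₁, hA₁0, hA₁⟩ := periodic_bdd T hT x₁ hx₁.continuous hx₁_per
  obtain ⟨A₂, hA₂0, hA₂⟩ := periodic_bdd T hT x₂ hx₂.continuous hx₂_per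
  obtain ⟨B₁, hB₁0, hB₁⟩ := periodic_bdd T hT _ r13 (periodic_deriv T _ _ r11 hx₁_per)
  obtain ⟨B₂, hB₂0, hB₂⟩ := periodic_bdd T hT _ r23 (periodic_deriv T _ _ r21 hx₂_per)
  set D := A₁ + A₂ with hD
  obtain ⟨C, hC0, hC⟩ := quad_growth T hT v hv_cont hv_per a b ha hb δ hδ hv_growth D
  set K : ℝ := Real.exp (2 * C * (D - (-D))) + B₁ + B₂ with hK
  have hexp : 0 < Real.exp (2 * C * (D - (-D))) := Real.exp_pos _
  have hK0 : 0 ≤ K := by positivity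
  set M : ℝ := C * (1 + K^2) with hM
  have hM0 : 0 ≤ M := by positivity
  set cx : ℝ → ℝ → ℝ := fun t x => max (x₁ t) (min (x₂ t) x) with hcx
  set cy : ℝ → ℝ := fun y => max (-K) (min K y) with hcy
  set e : ℝ → ℝ := fun z => max (-M) (min M z) with he
  set F : ℝ → ℝ → ℝ → ℝ := fun t x y => v t (cx t x) (cy y) + e (x - cx t x) with hF
  have hcxb : ∀ t x, x₁ t ≤ cx t x ∧ cx t x ≤ x₂ t := fun t x =>
    ⟨le_max_left _ _, max_le (h_lt t).le (min_le_left _ _)⟩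
  have hcxD : ∀ t x, |cx t x| ≤ D := by
    intro t x
    have := abs_le.1 (hA₁ t)
    have := abs_le.1 (hA₂ t)
    have := hcxb t x
    rw [abs_le]; constructor <;> linarith
  have hcyb : ∀ y, |cy y| ≤ K := fun y =>
    abs_le.2 ⟨le_max_left _ _, max_le (by linarith) (min_le_left _ _)⟩
  have hcyid : ∀ y, |y| ≤ K → cy y = y := by
    intro y hy
    rw [abs_le] at hy
    simp only [hcy]
    rw [min_eq_right hy.2, max_eq_right hy.1]
  have hcysq : ∀ y, (cy y)^2 ≤ y^2 := by
    intro y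
    by_cases hy : |y| ≤ K
    · rw [hcyid y hy]
    · apply sq_le_sq.2
      exact (hcyb y).trans (not_le.1 hy).le
  have heb : ∀ z, |e z| ≤ M := fun z =>
    abs_le.2 ⟨le_max_left _ _, max_le (by linarith) (min_le_left _ _)⟩
  have hvM : ∀ t x y, |v t (cx t x) (cy y)| ≤ M := by
    intro t x y
    refine (hC _ _ _ (hcxD t x)).trans ?_
    have : (cy y)^2 ≤ K^2 := sq_le_sq.2 (by rw [abs_of_nonneg hK0]; exact hcyb y)
    simp only [hM]
    gcongr
  have hcxc : Continuous fun p : ℝ × ℝ × ℝ => cx p.1 p.2.1 := by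
    have := hx₁.continuous
    have := hx₂.continuous
    simp only [hcx]
    fun_prop
  have hcyc : Continuous fun p : ℝ × ℝ × ℝ => cy p.2.2 := by
    simp only [hcy]
    fun_prop
  have hFc : Continuous fun p : ℝ × ℝ × ℝ => F p.1 p.2.1 p.2.2 := by
    simp only [hF]
    apply Continuous.add
    · exact hv_cont.comp (continuous_fst.prodMk (hcxc.prodMk hcyc))
    · simp only [he]
      fun_prop
  have hFper : ∀ t x y, F (t + T) x y = F t x y := by
    intro t x y
    simp only [hF, hcx, hv_per, hx₁_per t, hx₂_per t]
  have hFM : ∀ t x y, |F t x y| ≤ M + M := fun t x y =>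
    (abs_add_le _ _).trans (add_le_add (hvM t x y) (heb _))
  obtain ⟨x, p, hxper, hx, hp⟩ := bounded_exists T hT (M + M) (D + M) (by linarith) (by positivity) F hFc hFper hFM
    (by
      intro t x y hxR
      have h1 := (abs_le.1 (hvM t x y)).1
      have h2 : M ≤ e (x - cx t x) := by
        have := (abs_le.1 (hcxD t x)).2
        exact le_max_of_le_right (le_min le_rfl (by linarith))
      simp only [hF]
      linarith)
    (by
      intro t x y hxR
      have h1 := (abs_le.1 (hvM t x y)).2
      have h2 : e (x - cx t x) ≤ -M := by
        have := (abs_le.1 (hcxD t x)).1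
        exact max_le le_rfl ((min_le_right _ _).trans (by linarith))
      simp only [hF]
      linarith)
  have hup : ∀ t, x t < x₂ t := by
    intro t
    have := max_princ T hT (fun t => x t - x₂ t) (fun t => p t - deriv x₂ t)
      (fun t => F t (x t) (p t) - deriv (deriv x₂) t) (hxper.sub hx₂_per)
      (fun t => (hx t).sub (r21 t)) (fun t => (hp t).sub (r22 t)) (by
        intro t h0 h1
        have h2 : cx t (x t) = x₂ t := by
          simp only [hcx]
          rw [min_eq_left (by linarith), max_eq_right (h_lt t).le]
        have h3 : cy (p t) = deriv x₂ t := by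
          rw [sub_eq_zero.1 h1]
          exact hcyid _ ((hB₂ t).trans (by linarith))
        have h4 : 0 ≤ e (x t - x₂ t) := le_max_of_le_right (le_min hM0 h0)
        have h5 := h_up t
        simp only [hF, h2, h3]
        linarith) t
    linarith
  have hlow : ∀ t, x₁ t < x t := by
    intro t
    have := max_princ T hT (fun t => x₁ t - x t) (fun t => deriv x₁ t - p t)
      (fun t => deriv (deriv x₁) t - F t (x t) (p t)) (hx₁_per.sub hxper)
      (fun t => (r11 t).sub (hx t)) (fun t => (r12 t).sub (hp t)) (by
        intro t h0 h1
        have h2 : cx t (x t) = x₁ t := by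
          simp only [hcx]
          rw [max_eq_left ((min_le_right _ _).trans (by linarith))]
        have h3 : cy (p t) = deriv x₁ t := by
          rw [← sub_eq_zero.1 h1]
          exact hcyid _ ((hB₁ t).trans (by linarith))
        have h4 : e (x t - x₁ t) ≤ 0 := max_le (by linarith) ((min_le_right _ _).trans (by linarith))
        have h5 := h_low t
        simp only [hF, h2, h3]
        linarith) t
    linarith
  have hcxid : ∀ t, cx t (x t) = x t := by
    intro t
    simp only [hcx]
    rw [min_eq_right (hup t).le, max_eq_right (hlow t).le]
  have hFx : ∀ t, F t (x t) (p t) = v t (x t) (cy (p t)) := by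
    intro t
    simp only [hF, hcxid, sub_self]
    have : e 0 = 0 := by
      simp only [he]
      rw [min_eq_right hM0, max_eq_right (by linarith)]
    rw [this, add_zero]
  have hxD : ∀ t, |x t| ≤ D := fun t => by rw [← hcxid t]; exact hcxD _ _
  have hq : ∀ t, |F t (x t) (p t)| ≤ C * (1 + p t ^ 2) := by
    intro t
    rw [hFx]
    refine (hC _ _ _ (hxD t)).trans ?_
    have := hcysq (p t)
    gcongr
  have hzero : ∀ t, ∃ s ≤ t, p s = 0 := by
    intro t
    have hxc : Continuous x := continuous_iff_continuousAt.2 fun t => (hx t).continuousAt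
    obtain ⟨s, hs, h0⟩ := exists_hasDerivAt_eq_zero (f := x) (f' := p) (show t - T < t by linarith)
      hxc.continuousOn (by rw [hxper.sub_eq]) (fun s _ => hx s)
    exact ⟨s, hs.2.le, h0⟩
  have hpK : ∀ t, |p t| ≤ K := by
    intro t
    obtain ⟨s, hst, hs⟩ := hzero t
    have h1 := nagumo x p _ C (-D) D hC0 hx hp hq (fun t => abs_le.1 (hxD t)) t s hst hs.le
    have h2 := nagumo (fun t => -x t) (fun t => -p t) (fun t => -F t (x t) (p t)) C (-D) D hC0
      (fun t => (hx t).neg) (fun t => (hp t).neg) (fun t => by simpa using hq t)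
      (fun t => by have := abs_le.1 (hxD t); constructor <;> linarith) t s hst (by simp [hs])
    rw [abs_le]
    constructor <;> linarith
  have hp' : ∀ t, HasDerivAt p (v t (x t) (p t)) t := by
    intro t
    have := hp t
    rwa [hFx, hcyid _ (hpK t)] at this
  have hdx : deriv x = p := funext fun t => (hx t).deriv
  have hdp : deriv p = fun t => v t (x t) (p t) := funext fun t => (hp' t).deriv
  have hxc : Continuous x := continuous_iff_continuousAt.2 fun t => (hx t).continuousAt
  have hpc : Continuous p := continuous_iff_continuousAt.2 fun t => (hp t).continuousAt
  refine ⟨x, ?_, hxper, ?_, fun t => ⟨hlow t, hup t⟩⟩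
  · refine (contDiff_succ_iff_deriv (n := 1)).2 ⟨fun t => (hx t).differentiableAt, by simp, ?_⟩
    rw [hdx]
    refine contDiff_one_iff_deriv.2 ⟨fun t => (hp t).differentiableAt, ?_⟩
    rw [hdp]
    exact hv_cont.comp (continuous_id.prodMk (hxc.prodMk hpc))
  · intro t
    rw [hdx, hdp]
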